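/- Let δ > 0, set γ = δ/2, and let U be the union of the plus-shapes P_γ(i,j) over all plus-anchors (i,j). Let r and r' be nonempty axis-aligned rectangles in ℝ² each disjoint from U, with centres c and c' (the centre of [a,b] × [c,d] is ((a+b)/2, (c+d)/2)). If the centres satisfy d₁(c, c') < δ, then for every q ∈ r and q' ∈ r' we have d₁(q, q') < 3.5·δ. -/

import Mathlib

open Set

/-- The `L₁` distance on `ℝ²`. -/
noncomputable def d1 (p q : ℝ × ℝ) : ℝ := |p.1 - q.1| + |p.2 - q.2|

/-- The axis-aligned rectangle `[a,b] × [c,d]`. -/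
def rect (a b c d : ℝ) : Set (ℝ × ℝ) := Set.Icc a b ×ˢ Set.Icc c d

/-- The plus-shape with anchor grid point `(i,j)` in the grid with spacing `γ`. -/
def plusShape (γ : ℝ) (i j : ℤ) : Set (ℝ × ℝ) :=
  ({(i : ℝ) * γ} ×ˢ Set.Icc (((j : ℝ) - 1) * γ) (((j : ℝ) + 1) * γ)) ∪
  (Set.Icc (((i : ℝ) - 1) * γ) (((i : ℝ) + 1) * γ) ×ˢ {(j : ℝ) * γ})

/-- `(i,j)` is a plus-anchor if `i` is even and `i ≡ j (mod 4)`. -/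
def plusAnchor (i j : ℤ) : Prop := Even i ∧ i ≡ j [ZMOD 4]

/-!
A nonempty rectangle that misses every plus-shape has width plus height less than `5γ`. This is
clear if both are less than `2γ`. If the width is at least `2γ`, the rectangle meets some line
`x = iγ` with `i` even, and we take the leftmost one. The arms on this line leave gaps of length
`2γ`, and the gap crossed by the rectangle is centred at the height `jγ` of a plus-shape anchored
at `(i + 2, j)`. The vertical arm of that plus-shape fills the whole gap, so the width is less than
`4γ`. If moreover the height is at least `γ`, the rectangle contains points at height `jγ`, and the
horizontal arm cuts the width down to less than `3γ`, while the height is less than `2γ`. The case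
of height at least `2γ` is symmetric. Every point of the rectangle is thus within
`5γ / 2 = 5δ / 4` of the centre, and the triangle inequality through both centres gives
`5δ / 4 + δ + 5δ / 4 = 3.5δ`.
-/

/-- The obstacle set `U`: the union of all plus-shapes of the grid with spacing `γ` whose grid point
is a plus-anchor. -/
def plusUnion (γ : ℝ) : Set (ℝ × ℝ) :=
  ⋃ (ij : ℤ × ℤ) (_ : plusAnchor ij.1 ij.2), plusShape γ ij.1 ij.2

lemma lt_or_lt_of_disjoint_Icc {α : Type*} [LinearOrder α] {a b c d : α}
    (hab : a ≤ b) (hcd : c ≤ d) (h : Disjoint (Icc a b) (Icc c d)) :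
    b < c ∨ d < a := by
  contrapose! h
  exact not_disjoint_iff.2 ⟨max a c, ⟨le_max_left _ _, max_le hab h.1⟩,
    ⟨le_max_right _ _, max_le h.2 hcd⟩⟩

section Distance

variable {a b c d : ℝ}

lemma d1_comm (p q : ℝ × ℝ) : d1 p q = d1 q p := by
  simp only [d1, abs_sub_comm]

lemma d1_triangle (p q r : ℝ × ℝ) : d1 p r ≤ d1 p q + d1 q r := by
  simp only [d1]
  linarith [abs_sub_le p.1 q.1 r.1, abs_sub_le p.2 q.2 r.2]

lemma abs_sub_midpoint_le {x : ℝ} (hx : x ∈ Icc a b) : |x - (a + b) / 2| ≤ (b - a) / 2 := by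
  rwa [Real.Icc_eq_closedBall, Metric.mem_closedBall, Real.dist_eq] at hx

lemma d1_center_le {q : ℝ × ℝ} (hq : q ∈ rect a b c d) :
    d1 q ((a + b) / 2, (c + d) / 2) ≤ ((b - a) + (d - c)) / 2 := by
  simp only [d1]
  linarith [abs_sub_midpoint_le hq.1, abs_sub_midpoint_le hq.2]

end Distance

section Anchors

variable {i j : ℤ}

lemma plusAnchor.symm (h : plusAnchor i j) : plusAnchor j i := by
  obtain ⟨hi, hij⟩ := h
  rw [Int.even_iff] at hi
  exact ⟨Int.even_iff.2 (by unfold Int.ModEq at hij; omega), hij.symm⟩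

lemma preimage_swap_plusShape (γ : ℝ) (i j : ℤ) :
    Prod.swap ⁻¹' plusShape γ i j = plusShape γ j i := by
  simp only [plusShape, preimage_union, preimage_swap_prod, union_comm]

lemma preimage_swap_plusUnion (γ : ℝ) : Prod.swap ⁻¹' plusUnion γ = plusUnion γ := by
  have swap_subset : Prod.swap ⁻¹' plusUnion γ ⊆ plusUnion γ := by
    simp only [plusUnion, preimage_iUnion, preimage_swap_plusShape]
    exact iUnion₂_subset fun ij hij =>
      subset_iUnion₂_of_subset (ij.2, ij.1) hij.symm subset_rfl
  exact swap_subset.antisymm (preimage_mono (f := Prod.swap) swap_subset)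

lemma plusShape_subset_plusUnion (γ : ℝ) (h : plusAnchor i j) :
    plusShape γ i j ⊆ plusUnion γ :=
  subset_iUnion₂_of_subset (i, j) h subset_rfl

end Anchors

section Rectangles

variable {γ a b c d : ℝ} {i j : ℤ}

lemma disjoint_rect_plusUnion_swap (h : Disjoint (rect a b c d) (plusUnion γ)) :
    Disjoint (rect c d a b) (plusUnion γ) := by
  simpa only [rect, preimage_swap_prod, preimage_swap_plusUnion] using h.preimage Prod.swap

lemma below_or_above_of_vertical_arm (hγ : 0 ≤ γ) (hcd : c ≤ d)
    (h : Disjoint (rect a b c d) (plusUnion γ)) (hij : plusAnchor i j)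
    (hi : i * γ ∈ Icc a b) : d < (j - 1) * γ ∨ (j + 1) * γ < c := by
  have arm_disjoint : Disjoint (Icc a b ×ˢ Icc c d)
      ({(i : ℝ) * γ} ×ˢ Icc ((j - 1) * γ) ((j + 1) * γ)) :=
    h.mono_right (subset_union_left.trans (plusShape_subset_plusUnion γ hij))
  rcases disjoint_prod.1 arm_disjoint with h_fst | h_snd
  · exact absurd hi (disjoint_singleton_right.1 h_fst)
  · exact lt_or_lt_of_disjoint_Icc hcd (by gcongr; linarith) h_snd

lemma left_or_right_of_horizontal_arm (hγ : 0 ≤ γ) (hab : a ≤ b)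
    (h : Disjoint (rect a b c d) (plusUnion γ)) (hij : plusAnchor i j)
    (hj : j * γ ∈ Icc c d) : b < (i - 1) * γ ∨ (i + 1) * γ < a :=
  below_or_above_of_vertical_arm hγ hab (disjoint_rect_plusUnion_swap h) hij.symm hj

lemma exists_modEq_mul_mem_Ico {n : ℤ} (hn : 0 < n) (hγ : 0 < γ) (i : ℤ) (c : ℝ) :
    ∃ j : ℤ, i ≡ j [ZMOD n] ∧ j * γ ∈ Ico c (c + n * γ) := by
  have period_pos : 0 < n * γ := mul_pos (Int.cast_pos.2 hn) hγ
  obtain ⟨k, hk, -⟩ := existsUnique_add_zsmul_mem_Ico period_pos (i * γ) c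
  refine ⟨i + n * k, Int.modEq_iff_dvd.2 ⟨k, by ring⟩, ?_⟩
  convert hk using 1
  push_cast [zsmul_eq_mul]
  ring

lemma exists_even_mul_mem_Ico (hγ : 0 < γ) (a : ℝ) :
    ∃ i : ℤ, Even i ∧ i * γ ∈ Ico a (a + 2 * γ) := by
  obtain ⟨i, hi, hia⟩ := exists_modEq_mul_mem_Ico two_pos hγ 0 a
  exact ⟨i, Int.even_iff.2 hi.symm, mod_cast hia⟩

lemma exists_plusAnchor_gap (hγ : 0 < γ) (hcd : c ≤ d)
    (h : Disjoint (rect a b c d) (plusUnion γ)) (hi_even : Even i) (hi : i * γ ∈ Icc a b) :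
    ∃ j : ℤ, plusAnchor (i + 2) j ∧ (j - 1) * γ < c ∧ d < (j + 1) * γ := by
  -- The lowest arm on the line `x = iγ` not entirely below the rectangle must lie above it.
  obtain ⟨j, hij, hcj, hjc⟩ := exists_modEq_mul_mem_Ico four_pos hγ i (c - γ)
  have d_lt : d < (j - 1) * γ :=
    (below_or_above_of_vertical_arm hγ.le hcd h ⟨hi_even, hij⟩ hi).resolve_right (by linarith)
  have anchor : plusAnchor (i + 2) (j - 2) :=
    ⟨hi_even.add even_two, by unfold Int.ModEq at hij ⊢; omega⟩
  refine ⟨j - 2, anchor, ?_, ?_⟩ <;> push_cast at hjc ⊢ <;> linarith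

lemma width_add_height_lt_of_two_mul_le_width (hγ : 0 < γ) (hcd : c ≤ d)
    (h : Disjoint (rect a b c d) (plusUnion γ)) (hwidth : 2 * γ ≤ b - a) :
    (b - a) + (d - c) < 5 * γ := by
  obtain ⟨i, hi_even, hai, hia⟩ := exists_even_mul_mem_Ico hγ a
  obtain ⟨j, hij, hjc, hdj⟩ :=
    exists_plusAnchor_gap hγ hcd h hi_even ⟨hai, by linarith⟩
  have b_lt : b < (i + 2) * γ := by
    by_contra! hib
    have hi_mem : (↑(i + 2) : ℝ) * γ ∈ Icc a b := by
      push_cast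
      exact ⟨by linarith, hib⟩
    rcases below_or_above_of_vertical_arm hγ.le hcd h hij hi_mem with below | above <;> linarith
  by_cases hheight : d - c < γ
  · linarith
  · have hj_mem : j * γ ∈ Icc c d := ⟨by linarith, by linarith⟩
    have b_lt' : b < (i + 1) * γ := by
      have arm_cases := left_or_right_of_horizontal_arm hγ.le (by linarith) h hij hj_mem
      push_cast at arm_cases
      rcases arm_cases with left | right <;> linarith
    linarith

lemma width_add_height_lt_of_disjoint_plusUnion (hγ : 0 < γ) (hab : a ≤ b) (hcd : c ≤ d)
    (h : Disjoint (rect a b c d) (plusUnion γ)) : (b - a) + (d - c) < 5 * γ := by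
  by_cases hwidth : 2 * γ ≤ b - a
  · exact width_add_height_lt_of_two_mul_le_width hγ hcd h hwidth
  by_cases hheight : 2 * γ ≤ d - c
  · linarith [width_add_height_lt_of_two_mul_le_width hγ hab
      (disjoint_rect_plusUnion_swap h) hheight]
  linarith

lemma d1_center_lt_of_disjoint_plusUnion (hγ : 0 < γ)
    (h : Disjoint (rect a b c d) (plusUnion γ)) {q : ℝ × ℝ} (hq : q ∈ rect a b c d) :
    d1 q ((a + b) / 2, (c + d) / 2) < 5 * γ / 2 := by
  have semiperimeter_lt := width_add_height_lt_of_disjoint_plusUnion hγ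
    (hq.1.1.trans hq.1.2) (hq.2.1.trans hq.2.2) h
  linarith [d1_center_le hq]

end Rectangles

theorem stmt9 (δ : ℝ) (hδ : 0 < δ)
    (x1 x2 y1 y2 x1' x2' y1' y2' : ℝ)
    (hx : x1 ≤ x2) (hy : y1 ≤ y2) (hx' : x1' ≤ x2') (hy' : y1' ≤ y2')
    (hdisj : Disjoint (rect x1 x2 y1 y2)
      (⋃ (ij : ℤ × ℤ) (_ : plusAnchor ij.1 ij.2), plusShape (δ / 2) ij.1 ij.2))
    (hdisj' : Disjoint (rect x1' x2' y1' y2')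
      (⋃ (ij : ℤ × ℤ) (_ : plusAnchor ij.1 ij.2), plusShape (δ / 2) ij.1 ij.2))
    (hcent : d1 ((x1 + x2) / 2, (y1 + y2) / 2) ((x1' + x2') / 2, (y1' + y2') / 2) < δ) :
    ∀ q ∈ rect x1 x2 y1 y2, ∀ q' ∈ rect x1' x2' y1' y2',
      d1 q q' < 3.5 * δ := by
  intro q hq q' hq'
  set p : ℝ × ℝ := ((x1 + x2) / 2, (y1 + y2) / 2)
  set p' : ℝ × ℝ := ((x1' + x2') / 2, (y1' + y2') / 2)
  have q_near : d1 q p < 5 * (δ / 2) / 2 :=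
    d1_center_lt_of_disjoint_plusUnion (half_pos hδ) hdisj hq
  have q'_near : d1 p' q' < 5 * (δ / 2) / 2 :=
    d1_comm q' p' ▸ d1_center_lt_of_disjoint_plusUnion (half_pos hδ) hdisj' hq'
  calc d1 q q' ≤ d1 q p + d1 p q' := d1_triangle q p q'
    _ ≤ d1 q p + (d1 p p' + d1 p' q') := by gcongr; exact d1_triangle p p' q'
    _ < 5 * (δ / 2) / 2 + (δ + 5 * (δ / 2) / 2) := by gcongr
    _ = 3.5 * δ := by ring
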